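/- Let n ≥ 3 and let 𝒜 = {[A₁],…,[A_r]} be a malnormal subgroup system of F_n, with L, Γ_i, 𝒞 and S_k as in the context. Let k ≥ 3, let S_k⁰ ⊆ S_k be a set containing exactly one of w, w⁻¹ for every w ∈ S_k, and define M : S_{k−1} × S_k⁰ → {0,1} by M(v,w) = 1 if there exists b ∈ 𝔄 with |vb| = |v|+1 and (w = vb or w⁻¹ = vb), and M(v,w) = 0 otherwise. Then for every u ∈ S_{k−2} and every w ∈ S_k⁰: Σ_{b ∈ 𝔄, |bu| = |u|+1, bu ∈ S_{k−1}} M(bu, w) = Σ_{b ∈ 𝔄, |bu⁻¹| = |u|+1, bu⁻¹ ∈ S_{k−1}} M(bu⁻¹, w). -/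

import Mathlib

/-!
For nontrivial `v` with `|v| = k - 2` and `w ∈ S_k`, a letter `b` contributes to `Σ_b M(bv, w)`
exactly when `w` or `w⁻¹` is a reduced word `b v c`. The requirement `bv ∈ S_{k-1}` is then
automatic: `bv` is a subword of `w` or `w⁻¹`, and `S_k` is closed under inversion because `𝒞` is
(`inv_mem_Ccal`; the path of `x⁻¹` is a translate of the path of `x`, and `g T_B ⊆ T_{gBg⁻¹}`).
At most one letter contributes: `w` and `w⁻¹` each determine their first letter, and they cannot
both have middle `v`, since then `v = v⁻¹`, which is impossible in a torsion-free group.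

Hence the sum is the indicator of the condition that `w` or `w⁻¹` has middle `v` (`row_sum`,
`HasMiddle`). Since the middle of `w⁻¹` is the inverse of the middle of `w`, this condition is
unchanged when `v` is replaced by `v⁻¹` (`HasMiddle.inv`), which is the claim.
-/

open scoped Classical
open MeasureTheory

noncomputable section

namespace RelCurr

/-- The alphabet `𝔄 = ℬ ∪ ℬ⁻¹`: a letter is a generator together with a sign. -/
abbrev Letter (n : ℕ) := Fin n × Bool

/-- The inverse of a letter. -/
def linv {n : ℕ} (x : Letter n) : Letter n := (x.1, !x.2)

/-- The free group of rank `n` on the basis `Fin n`. -/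
abbrev F (n : ℕ) := FreeGroup (Fin n)

/-- The reduced word of an element of `F n`. -/
def rword {n : ℕ} (g : F n) : List (Letter n) := FreeGroup.toWord g

/-- The length `|g|` of the reduced word of `g`. -/
def wlen {n : ℕ} (g : F n) : ℕ := (rword g).length

/-- The single-letter element of `F n` given by a letter. -/
def letterE {n : ℕ} (b : Letter n) : F n := FreeGroup.mk [b]

/-- The conjugate subgroup `g A g⁻¹`. -/
def conjSub {n : ℕ} (g : F n) (A : Subgroup (F n)) : Subgroup (F n) :=
  Subgroup.map (MulAut.conj g).toMonoidHom A

/-- A subgroup `A` is malnormal if `xAx⁻¹ ∩ A = {1}` for every `x ∉ A`. -/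
def Malnormal {n : ℕ} (A : Subgroup (F n)) : Prop :=
  ∀ x : F n, x ∉ A → conjSub x A ⊓ A = ⊥

/-- The word metric on the Cayley tree `T`. -/
def dist' {n : ℕ} (x y : F n) : ℕ := wlen (x⁻¹ * y)

/-- The cyclically reduced length of `a`. -/
def cycLen {n : ℕ} (a : F n) : ℕ := sInf { m | ∃ h : F n, wlen (h⁻¹ * a * h) = m }

/-- The vertex set of the minimal `A`-invariant subtree `T_A` of the Cayley tree:
the union of the axes of the nontrivial elements of `A`. -/
def treeVerts {n : ℕ} (A : Subgroup (F n)) : Set (F n) :=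
  { h | ∃ a ∈ A, a ≠ 1 ∧ wlen (h⁻¹ * a * h) = cycLen a }

/-- `γ_w ⊆ S`: every prefix of the reduced word of `w` lies in the vertex set `S`. -/
def pathIn {n : ℕ} (w : F n) (S : Set (F n)) : Prop :=
  ∀ m ≤ wlen w, FreeGroup.mk ((rword w).take m) ∈ S

/-- An element is cyclically reduced if the last letter of its reduced word is not the
inverse of the first letter. -/
def CyclicallyReduced {n : ℕ} (w : F n) : Prop :=
  ∀ x y : Letter n, (rword w).head? = some x → (rword w).getLast? = some y → y ≠ linv x

/-- `v` is a length-one extension of `w`. -/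
def LengthOneExt {n : ℕ} (w v : F n) : Prop :=
  ∃ b : Letter n, v = w * letterE b ∧ wlen v = wlen w + 1

/-- `a` is an extension of `w`: the reduced word of `w` is a proper prefix of that of `a`. -/
def ExtensionOf {n : ℕ} (w a : F n) : Prop :=
  rword w <+: rword a ∧ wlen w < wlen a

/-- `g` is a proper power. -/
def IsProperPower {n : ℕ} (g : F n) : Prop := ∃ (h : F n) (k : ℕ), 2 ≤ k ∧ g = h ^ k

section System

variable {n r : ℕ} (A : Fin r → Subgroup (F n))

/-- `[B] ∈ 𝒜`, i.e. `B` is a conjugate of one of the subgroups of the system. -/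
def InSystem (B : Subgroup (F n)) : Prop := ∃ (i : Fin r) (g : F n), B = conjSub g (A i)

/-- The family `A` represents a subgroup system: finite rank subgroups distinct
from `{1}` and `F n`. -/
def IsSystem : Prop := (∀ i, (A i).FG) ∧ (∀ i, A i ≠ ⊥) ∧ (∀ i, A i ≠ ⊤)

/-- The subgroup system is malnormal. -/
def SystemMalnormal : Prop :=
  (∀ i, Malnormal (A i)) ∧
  ∀ B₁ B₂ : Subgroup (F n), InSystem A B₁ → InSystem A B₂ → B₁ ≠ B₂ → B₁ ⊓ B₂ = ⊥

/-- `g` is `𝒜`-peripheral: trivial or contained in a conjugate of one of the `A i`. -/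
def Peripheral (g : F n) : Prop := g = 1 ∨ ∃ B, InSystem A B ∧ g ∈ B

/-- The diameter of the intersection of the trees of two distinct subgroups of the
system is at most `L`. -/
def DiamBound (L : ℕ) : Prop :=
  ∀ B₁ B₂ : Subgroup (F n), InSystem A B₁ → InSystem A B₂ → B₁ ≠ B₂ →
    ∀ x ∈ treeVerts B₁ ∩ treeVerts B₂, ∀ y ∈ treeVerts B₁ ∩ treeVerts B₂, dist' x y ≤ L

/-- `B ∈ Γ_i`: `B` is a conjugate of `A i` whose tree contains the base point `1`. -/
def GammaMem (i : Fin r) (B : Subgroup (F n)) : Prop :=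
  (∃ g : F n, B = conjSub g (A i)) ∧ (1 : F n) ∈ treeVerts B

/-- The finite set `𝒞` of words of length `L+2` whose path is contained in no tree
`T_B` with `B ∈ Γ_i`, for every `i`. -/
def Ccal (L : ℕ) : Set (F n) :=
  { w | wlen w = L + 2 ∧ ∀ (i : Fin r) (B : Subgroup (F n)), GammaMem A i B →
      ¬ pathIn w (treeVerts B) }

/-- `F_n − 𝒜`: the words containing an element of `𝒞` as a contiguous subword. -/
def FmA (L : ℕ) : Set (F n) := { w | ∃ x ∈ Ccal A L, rword x <:+: rword w }

/-- `S_k`: words of length `k` not containing any element of `𝒞` as a subword. -/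
def Sk (L k : ℕ) : Set (F n) := { w | wlen w = k ∧ w ∉ FmA A L }

end System

/-! ### The boundary of `F n` -/

/-- An infinite reduced word. -/
def IsRed {n : ℕ} (ξ : ℕ → Letter n) : Prop := ∀ i, ξ (i + 1) ≠ linv (ξ i)

/-- The Gromov boundary `∂F_n`, realized as the space of infinite reduced words,
topologized as a subspace of the product space. -/
def Boundary (n : ℕ) : Type := { ξ : ℕ → Letter n // IsRed ξ }

instance {n : ℕ} : TopologicalSpace (Boundary n) :=
  instTopologicalSpaceSubtype

/-- The length-`m` prefix of a boundary point. -/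
def bpre {n : ℕ} (ξ : Boundary n) (m : ℕ) : List (Letter n) :=
  (List.range m).map ξ.1

/-- The reduced word of `w` is a prefix of the infinite word `ξ`. -/
def wordPrefixOf {n : ℕ} (w : F n) (ξ : Boundary n) : Prop :=
  bpre ξ (wlen w) = rword w

/-- The boundary (limit set) `∂A ⊆ ∂F_n` of a subgroup `A`. -/
def limitSet {n : ℕ} (A : Subgroup (F n)) : Set (Boundary n) :=
  { ξ | ∀ m : ℕ, ∃ a ∈ A, bpre ξ m <+: rword a }

/-- `ξ = g^{+∞}`: `ξ` is the limit of the reduced words of the powers of `g`. -/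
def IsPosLimit {n : ℕ} (g : F n) (ξ : Boundary n) : Prop :=
  ∀ m : ℕ, ∃ N : ℕ, ∀ k ≥ N, bpre ξ m <+: rword (g ^ k)

/-- The number of letters cancelled when concatenating the word `l` with the
infinite reduced word `ξ`. -/
def cancelLen {n : ℕ} (l : List (Letter n)) (ξ : ℕ → Letter n) : ℕ :=
  sSup { j | j ≤ l.length ∧ ∀ i < j, l.reverse[i]? = some (linv (ξ i)) }

/-- The sequence underlying the action of `g` on a boundary point: left multiplication
followed by cancellation. -/
def actSeq {n : ℕ} (g : F n) (ξ : ℕ → Letter n) : ℕ → Letter n :=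
  fun m =>
    if h : m < (rword g).length - cancelLen (rword g) ξ then
      (rword g).get ⟨m, by omega⟩
    else ξ (m - ((rword g).length - cancelLen (rword g) ξ) + cancelLen (rword g) ξ)

/-- The action of `F n` on its boundary: left multiplication followed by cancellation.
(The sequence `actSeq g ξ.1` is always reduced, so the first branch always applies.) -/
def bAct {n : ℕ} (g : F n) (ξ : Boundary n) : Boundary n :=
  if h : IsRed (actSeq g ξ.1) then ⟨actSeq g ξ.1, h⟩ else ξ

/-! ### The double boundary -/

/-- The diagonal action of `F n` on `Sym2 (∂F_n)`, whose restriction to the set of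
non-diagonal classes is the action on the double boundary `∂²F_n`. -/
def dbAct {n : ℕ} (g : F n) : Sym2 (Boundary n) → Sym2 (Boundary n) := Sym2.map (bAct g)

/-- `∂²𝒜`: the classes `{ξ,η}` with both endpoints in `g·∂A_i = ∂(gA_ig⁻¹)` for some
`i` and `g`. -/
def dblBndA {n r : ℕ} (A : Fin r → Subgroup (F n)) : Set (Sym2 (Boundary n)) :=
  { z | ∃ (i : Fin r) (g : F n) (ξ η : Boundary n), z = s(ξ, η) ∧
      ξ ∈ limitSet (conjSub g (A i)) ∧ η ∈ limitSet (conjSub g (A i)) }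

/-- The double boundary `∂²(F_n,𝒜)` of `F n` relative to `𝒜`, as a subset of
`Sym2 (∂F_n)`: non-diagonal classes not lying in `∂²𝒜`. -/
def relSet {n r : ℕ} (A : Fin r → Subgroup (F n)) : Set (Sym2 (Boundary n)) :=
  { z | ¬ z.IsDiag } \ dblBndA A

/-- The cylinder set `C(γ_w) ⊆ ∂²F_n` of the geodesic path from `1` to `w`. -/
def cylinder {n : ℕ} (w : F n) : Set (Sym2 (Boundary n)) :=
  { z | ∃ ξ η : Boundary n, z = s(ξ, η) ∧ ξ.1 0 ≠ η.1 0 ∧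
      (wordPrefixOf w ξ ∨ wordPrefixOf w η) }

instance {n : ℕ} : MeasurableSpace (Sym2 (Boundary n)) := borel _

/-- The action of `g ∈ F n` on `∂²(F_n,𝒜)`. (The action of `F n` preserves
`∂²(F_n,𝒜)`, so the first branch always applies.) -/
def relAct {n r : ℕ} (A : Fin r → Subgroup (F n)) (g : F n) (z : ↥(relSet A)) :
    ↥(relSet A) :=
  if h : dbAct g z.1 ∈ relSet A then ⟨dbAct g z.1, h⟩ else z

/-- The cylinder `C(γ_w)` as a subset of `∂²(F_n,𝒜)`. -/
def relCyl {n r : ℕ} (A : Fin r → Subgroup (F n)) (w : F n) : Set ↥(relSet A) :=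
  Subtype.val ⁻¹' cylinder w

/-- The translated cylinder `g·C(γ_w)` as a subset of `∂²(F_n,𝒜)`. -/
def relCylG {n r : ℕ} (A : Fin r → Subgroup (F n)) (g w : F n) : Set ↥(relSet A) :=
  Subtype.val ⁻¹' (dbAct g '' cylinder w)

/-- A relative current on `(F_n,𝒜)`: an `F_n`-invariant Radon measure on the
locally compact space `∂²(F_n,𝒜)` (finite on compacts, outer regular, inner regular
on open sets). -/
def IsRelCurrent {n r : ℕ} (A : Fin r → Subgroup (F n)) (μ : Measure ↥(relSet A)) : Prop :=
  (∀ (g : F n) (s : Set ↥(relSet A)), MeasurableSet s → μ (relAct A g ⁻¹' s) = μ s) ∧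
  μ.Regular

/-- The `F_n`-orbit of a point of `Sym2 (∂F_n)`, inside `∂²(F_n,𝒜)`. -/
def orbitOf {n r : ℕ} (A : Fin r → Subgroup (F n)) (z : Sym2 (Boundary n)) :
    Set ↥(relSet A) :=
  { y | ∃ h : F n, (y : Sym2 (Boundary n)) = dbAct h z }


/-! ### Lengths and reduced words of products -/

lemma rword_letterE {n : ℕ} (b : Letter n) : rword (letterE b) = [b] := by
  simp [rword, letterE]

lemma wlen_letterE {n : ℕ} (b : Letter n) : wlen (letterE b) = 1 := by
  simp [wlen, rword_letterE]

lemma letterE_linv {n : ℕ} (b : Letter n) : letterE (linv b) = (letterE b)⁻¹ := by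
  simp [letterE, linv, FreeGroup.inv_mk, FreeGroup.invRev]

lemma rword_inv {n : ℕ} (x : F n) : rword x⁻¹ = FreeGroup.invRev (rword x) :=
  FreeGroup.toWord_inv x

lemma wlen_inv {n : ℕ} (x : F n) : wlen x⁻¹ = wlen x := by
  simp [wlen, rword_inv]

lemma wlen_mul_le {n : ℕ} (x y : F n) : wlen (x * y) ≤ wlen x + wlen y :=
  FreeGroup.norm_mul_le x y

/-- Additivity of length means that no cancellation takes place. -/
lemma rword_mul {n : ℕ} {x y : F n} (h : wlen (x * y) = wlen x + wlen y) :
    rword (x * y) = rword x ++ rword y := by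
  have hs : (rword (x * y)).Sublist (rword x ++ rword y) := by
    unfold rword
    rw [FreeGroup.toWord_mul]
    exact FreeGroup.reduce.red.sublist
  exact hs.eq_of_length (by simpa [wlen] using h)

lemma rword_sandwich {n : ℕ} {v : F n} {b c : Letter n}
    (h : wlen (letterE b * v * letterE c) = wlen v + 2) :
    wlen (letterE b * v) = wlen v + 1 ∧ rword (letterE b * v) = b :: rword v ∧
      rword (letterE b * v * letterE c) = b :: (rword v ++ [c]) := by
  have h1 := wlen_mul_le (letterE b * v) (letterE c)
  have h2 := wlen_mul_le (letterE b) v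
  rw [wlen_letterE] at h1 h2
  have h3 : wlen (letterE b * v) = wlen v + 1 := by omega
  have h4 : rword (letterE b * v) = b :: rword v := by
    rw [rword_mul (by rw [wlen_letterE]; omega), rword_letterE]; rfl
  refine ⟨h3, h4, ?_⟩
  rw [rword_mul (by rw [wlen_letterE]; omega), rword_letterE, h4]; rfl

/-- The outer letters and the middle of a word `b v c` of length `|v| + 2` are determined
by the group element. -/
lemma sandwich_inj {n : ℕ} {v v' : F n} {b c b' c' : Letter n}
    (h : wlen (letterE b * v * letterE c) = wlen v + 2)
    (h' : wlen (letterE b' * v' * letterE c') = wlen v' + 2)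
    (e : letterE b * v * letterE c = letterE b' * v' * letterE c') : b = b' ∧ v = v' := by
  have e' := congrArg rword e
  rw [(rword_sandwich h).2.2, (rword_sandwich h').2.2, List.cons.injEq] at e'
  refine ⟨e'.1, FreeGroup.toWord_injective ?_⟩
  exact (List.append_inj' e'.2 rfl).1

/-! ### Invariance of `𝒞` and `S_k` under inversion -/

lemma cycLen_conj {n : ℕ} (g a : F n) : cycLen (g * a * g⁻¹) = cycLen a := by
  unfold cycLen
  congr 1
  ext m
  constructor
  · rintro ⟨h, rfl⟩
    exact ⟨g⁻¹ * h, by congr 1; group⟩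
  · rintro ⟨h, rfl⟩
    exact ⟨g * h, by congr 1; group⟩

/-- Equivariance of minimal subtrees: `g T_B ⊆ T_{gBg⁻¹}`. -/
lemma mul_mem_treeVerts {n : ℕ} (g : F n) {B : Subgroup (F n)} {h : F n}
    (hh : h ∈ treeVerts B) : g * h ∈ treeVerts (conjSub g B) := by
  obtain ⟨a, ha, ha1, hlen⟩ := hh
  refine ⟨g * a * g⁻¹, ⟨a, ha, by simp⟩, by simpa using ha1, ?_⟩
  rw [cycLen_conj, ← hlen]
  congr 1
  group

/-- The path of `x` is the translate by `x` of the path of `x⁻¹`, traversed backwards. -/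
lemma mk_take_eq {n : ℕ} (x : F n) (m : ℕ) :
    FreeGroup.mk ((rword x).take m) =
      x * FreeGroup.mk ((rword x⁻¹).take (wlen x - m)) := by
  have h1 : (rword x⁻¹).take (wlen x - m) = FreeGroup.invRev ((rword x).drop m) := by
    have hlen : (FreeGroup.invRev ((rword x).drop m)).length = wlen x - m := by
      simp [wlen]
    rw [rword_inv]
    conv_lhs => rw [← List.take_append_drop m (rword x), FreeGroup.invRev_append, ← hlen]
    exact List.take_left
  have h2 : x = FreeGroup.mk ((rword x).take m) * FreeGroup.mk ((rword x).drop m) := by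
    rw [FreeGroup.mul_mk, List.take_append_drop]
    exact FreeGroup.mk_toWord.symm
  rw [h1, ← FreeGroup.inv_mk]
  exact eq_mul_inv_of_mul_eq h2.symm

lemma inv_mem_Ccal {n r L : ℕ} (A : Fin r → Subgroup (F n)) {x : F n}
    (hx : x ∈ Ccal A L) : x⁻¹ ∈ Ccal A L := by
  refine ⟨by rw [wlen_inv]; exact hx.1, ?_⟩
  rintro i B ⟨⟨g, rfl⟩, -⟩ hp
  have key : pathIn x (treeVerts (conjSub x (conjSub g (A i)))) := by
    intro m _
    rw [mk_take_eq]
    exact mul_mem_treeVerts x (hp _ (by rw [wlen_inv]; omega))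
  refine hx.2 i _ ⟨⟨x * g, ?_⟩, ?_⟩ key
  · unfold conjSub
    rw [Subgroup.map_map]
    congr 1
    ext a
    simp
  · simpa [FreeGroup.one_eq_mk] using key 0 (Nat.zero_le _)

lemma infix_invRev {n : ℕ} {l l' : List (Letter n)} (h : l <:+: l') :
    FreeGroup.invRev l <:+: FreeGroup.invRev l' := by
  obtain ⟨s, t, rfl⟩ := h
  exact ⟨FreeGroup.invRev t, FreeGroup.invRev s, by simp [FreeGroup.invRev_append]⟩

lemma inv_mem_Sk {n r L k : ℕ} (A : Fin r → Subgroup (F n)) {w : F n}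
    (hw : w ∈ Sk A L k) : w⁻¹ ∈ Sk A L k := by
  refine ⟨by rw [wlen_inv]; exact hw.1, ?_⟩
  rintro ⟨x, hx, hi⟩
  refine hw.2 ⟨x⁻¹, inv_mem_Ccal A hx, ?_⟩
  have := infix_invRev hi
  rwa [← rword_inv, ← rword_inv, inv_inv] at this

/-! ### Words with a prescribed middle -/

/-- `w` or `w⁻¹` is a reduced word `b v c` obtained from `v` by adding one letter at each end. -/
def HasMiddle {n : ℕ} (v w : F n) : Prop :=
  ∃ b c : Letter n, wlen (letterE b * v * letterE c) = wlen v + 2 ∧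
    (w = letterE b * v * letterE c ∨ w⁻¹ = letterE b * v * letterE c)

lemma HasMiddle.inv {n : ℕ} {v w : F n} (h : HasMiddle v w) : HasMiddle v⁻¹ w := by
  obtain ⟨b, c, hl, hw⟩ := h
  have e : letterE (linv c) * v⁻¹ * letterE (linv b) =
      (letterE b * v * letterE c)⁻¹ := by
    simp only [letterE_linv]; group
  refine ⟨linv c, linv b, ?_, ?_⟩
  · rw [e, wlen_inv, wlen_inv, hl]
  · rw [e]
    rcases hw with h | h
    · exact Or.inr (by rw [← h])
    · exact Or.inl (by rw [← h, inv_inv])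

/-- For a nontrivial `v` the row sum `Σ_b M(bv, w)` is the indicator of `HasMiddle v w`:
the only letter that can contribute is the first letter of `w` or of `w⁻¹`. -/
lemma row_sum {n r L k : ℕ} (A : Fin r → Subgroup (F n)) {v w : F n} (hv : v ≠ 1)
    (hvk : wlen v = k - 2) (hk : 3 ≤ k) (hw : w ∈ Sk A L k) (M : F n → F n → ℕ)
    (hM1 : ∀ v w : F n,
      (∃ b : Letter n, wlen (v * letterE b) = wlen v + 1 ∧
        (w = v * letterE b ∨ w⁻¹ = v * letterE b)) → M v w = 1)
    (hM0 : ∀ v w : F n,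
      ¬ (∃ b : Letter n, wlen (v * letterE b) = wlen v + 1 ∧
        (w = v * letterE b ∨ w⁻¹ = v * letterE b)) → M v w = 0) :
    (∑ b : Letter n,
      if wlen (letterE b * v) = wlen v + 1 ∧ letterE b * v ∈ Sk A L (k - 1) then
        M (letterE b * v) w else 0) = if HasMiddle v w then 1 else 0 := by
  have hinv : v ≠ v⁻¹ := fun h => hv (self_eq_inv.mp h)
  -- `bv` is automatically in `S_{k-1}`, as a subword of `w` or `w⁻¹`, both of which are in `S_k`.
  have hterm : ∀ b : Letter n,
      (if wlen (letterE b * v) = wlen v + 1 ∧ letterE b * v ∈ Sk A L (k - 1) then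
        M (letterE b * v) w else 0) =
      if ∃ c, wlen (letterE b * v * letterE c) = wlen v + 2 ∧
        (w = letterE b * v * letterE c ∨ w⁻¹ = letterE b * v * letterE c) then 1 else 0 := by
    intro b
    by_cases h : ∃ c, wlen (letterE b * v * letterE c) = wlen v + 2 ∧
        (w = letterE b * v * letterE c ∨ w⁻¹ = letterE b * v * letterE c)
    · rw [if_pos h]
      obtain ⟨c, hl, hwc⟩ := h
      obtain ⟨h1, h2, h3⟩ := rword_sandwich hl
      have hS : letterE b * v * letterE c ∈ Sk A L k := by
        rcases hwc with e | e
        · exact e ▸ hw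
        · exact e ▸ inv_mem_Sk A hw
      have hS' : letterE b * v ∈ Sk A L (k - 1) := by
        refine ⟨by omega, ?_⟩
        rintro ⟨x, hx, hi⟩
        refine hS.2 ⟨x, hx, hi.trans ?_⟩
        rw [h2, h3]
        exact ⟨[], [c], by simp⟩
      rw [if_pos ⟨h1, hS'⟩]
      exact hM1 _ _ ⟨c, by omega, hwc⟩
    · rw [if_neg h]
      split_ifs with h1
      · refine hM0 _ _ ?_
        rintro ⟨c, hl, hwc⟩
        exact h ⟨c, by omega, hwc⟩
      · rfl
  rw [Finset.sum_congr rfl fun b _ => hterm b]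
  by_cases hm : HasMiddle v w
  · rw [if_pos hm]
    obtain ⟨b, c, hl, hwc⟩ := hm
    rw [Finset.sum_eq_single b, if_pos ⟨c, hl, hwc⟩]
    · intro b' _ hne
      refine if_neg ?_
      rintro ⟨c', hl', hwc'⟩
      -- `w` and `w⁻¹` cannot both have middle `v`, since `v ≠ v⁻¹` by torsion-freeness.
      have mixed : ∀ {d e d' e' : Letter n},
          wlen (letterE d * v * letterE e) = wlen v + 2 →
          wlen (letterE d' * v * letterE e') = wlen v + 2 →
          letterE d * v * letterE e ≠ (letterE d' * v * letterE e')⁻¹ := by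
        intro d e d' e' hd hd' he
        have e1 : (letterE d' * v * letterE e')⁻¹ =
            letterE (linv e') * v⁻¹ * letterE (linv d') := by
          simp only [letterE_linv]; group
        refine hinv (sandwich_inj hd ?_ (he.trans e1)).2
        rw [← e1, wlen_inv, wlen_inv, hd']
      rcases hwc with e | e <;> rcases hwc' with e' | e'
      · exact hne (sandwich_inj hl' hl (e'.symm.trans e)).1
      · exact mixed hl hl' (by rw [← e, ← e', inv_inv])
      · exact mixed hl' hl (by rw [← e, ← e', inv_inv])
      · exact hne (sandwich_inj hl' hl (e'.symm.trans e)).1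
    · intro h
      exact absurd (Finset.mem_univ b) h
  · rw [if_neg hm]
    refine Finset.sum_eq_zero fun b _ => if_neg ?_
    rintro ⟨c, h⟩
    exact hm ⟨b, c, h⟩

/-- The relation among the rows of the matrix M of the system of equations E¹_{k−1}. -/
theorem statement_14 (n r L : ℕ) (hn : 3 ≤ n) (A : Fin r → Subgroup (F n))
    (hsys : IsSystem A) (hmal : SystemMalnormal A) (hL : 1 ≤ L)
    (hdiam : DiamBound A L) (hbase : ∀ i, (1 : F n) ∈ treeVerts (A i))
    (k : ℕ) (hk : 3 ≤ k) (Sk0 : Set (F n)) (hSk0 : Sk0 ⊆ Sk A L k)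
    (hSk0' : ∀ w ∈ Sk A L k, Xor' (w ∈ Sk0) (w⁻¹ ∈ Sk0))
    (M : F n → F n → ℕ)
    (hM1 : ∀ v w : F n,
      (∃ b : Letter n, wlen (v * letterE b) = wlen v + 1 ∧
        (w = v * letterE b ∨ w⁻¹ = v * letterE b)) → M v w = 1)
    (hM0 : ∀ v w : F n,
      ¬ (∃ b : Letter n, wlen (v * letterE b) = wlen v + 1 ∧
        (w = v * letterE b ∨ w⁻¹ = v * letterE b)) → M v w = 0) :
    ∀ u ∈ Sk A L (k - 2), ∀ w ∈ Sk0,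
      (∑ b : Letter n,
        if wlen (letterE b * u) = wlen u + 1 ∧ letterE b * u ∈ Sk A L (k - 1) then
          M (letterE b * u) w else 0) =
      ∑ b : Letter n,
        if wlen (letterE b * u⁻¹) = wlen u + 1 ∧ letterE b * u⁻¹ ∈ Sk A L (k - 1) then
          M (letterE b * u⁻¹) w else 0 := by
  intro u hu w hw
  have hu1 : u ≠ 1 := by
    rintro rfl
    have : wlen (1 : F n) = 0 := by simp [wlen, rword]
    have := hu.1
    omega
  have hmid : HasMiddle u w ↔ HasMiddle u⁻¹ w :=
    ⟨HasMiddle.inv, fun h => by simpa using h.inv⟩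
  rw [← wlen_inv u, row_sum A (inv_ne_one.mpr hu1) ((wlen_inv u).trans hu.1) hk (hSk0 hw) M
    hM1 hM0, wlen_inv, row_sum A hu1 hu.1 hk (hSk0 hw) M hM1 hM0]
  simp only [hmid]

end RelCurr
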